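/- Set ε := 1/4. There exists a square-integrable function F : [0,∞)³ → ℝ, symmetric in its three variables and supported on the simplex {(t_1,t_2,t_3) ∈ [0,∞)³ : t_1+t_2+t_3 ≤ 3/2}, which is not almost everywhere zero, such that ∫_0^∞ F(t_1,t_2,t_3) dt_3 = 0 whenever t_1,t_2 ≥ 0 with t_1+t_2 > 1+ε = 5/4, and such that 3·∫_{t_1+t_2 ≤ 1−ε} (∫_0^∞ F(t_1,t_2,t_3) dt_3)² dt_1 dt_2 > 2·∫_{[0,∞)³} F(t_1,t_2,t_3)² dt_1 dt_2 dt_3. -/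

import Mathlib

open MeasureTheory

namespace Cutoff

lemma pint (c0 c1 c2 c3 c4 c5 c6 a b : ℝ) :
    ∫ x in a..b, (c0 + c1 * x + c2 * x ^ 2 + c3 * x ^ 3 + c4 * x ^ 4 + c5 * x ^ 5 + c6 * x ^ 6) =
    c0 * (b - a) + c1 / 2 * (b ^ 2 - a ^ 2) + c2 / 3 * (b ^ 3 - a ^ 3) + c3 / 4 * (b ^ 4 - a ^ 4)
     + c4 / 5 * (b ^ 5 - a ^ 5) + c5 / 6 * (b ^ 6 - a ^ 6) + c6 / 7 * (b ^ 7 - a ^ 7) := by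
  rw [intervalIntegral.integral_eq_sub_of_hasDerivAt
    (f := fun x => c0 * x + c1 / 2 * x ^ 2 + c2 / 3 * x ^ 3 + c3 / 4 * x ^ 4
     + c4 / 5 * x ^ 5 + c5 / 6 * x ^ 6 + c6 / 7 * x ^ 7)]
  · ring
  · intro x _
    have := ((((((((hasDerivAt_id x).const_mul c0).add ((hasDerivAt_pow 2 x).const_mul (c1/2))).add
      ((hasDerivAt_pow 3 x).const_mul (c2/3))).add ((hasDerivAt_pow 4 x).const_mul (c3/4))).add
      ((hasDerivAt_pow 5 x).const_mul (c4/5))).add ((hasDerivAt_pow 6 x).const_mul (c5/6))).add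
      ((hasDerivAt_pow 7 x).const_mul (c6/7)))
    refine this.congr_deriv ?_
    norm_num
    ring
  · exact (by fun_prop : Continuous _).intervalIntegrable _ _

lemma int1 (f P : ℝ → ℝ) (a b : ℝ) (hab : a ≤ b)
    (h : ∀ x, f x = if a < x ∧ x ≤ b then P x else 0) : ∫ x, f x = ∫ x in a..b, P x := by
  rw [intervalIntegral.integral_of_le hab, ← integral_indicator measurableSet_Ioc]
  congr 1; ext x; rw [h x]; simp [Set.indicator, Set.mem_Ioc]

lemma int2 (f : ℝ → ℝ → ℝ) (hf : Integrable (fun q : ℝ × ℝ => f q.1 q.2)) (a b : ℝ) (l u : ℝ → ℝ)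
    (P : ℝ → ℝ → ℝ) (hab : a ≤ b) (hl : ∀ x, a < x → x ≤ b → l x ≤ u x)
    (h : ∀ x y, f x y = if (a < x ∧ x ≤ b) ∧ (l x < y ∧ y ≤ u x) then P x y else 0) :
    ∫ q : ℝ × ℝ, f q.1 q.2 = ∫ x in a..b, ∫ y in (l x)..(u x), P x y := by
  have e : ∫ q : ℝ × ℝ, f q.1 q.2 = ∫ x, ∫ y, f x y := integral_prod _ hf
  rw [e]
  apply int1 _ _ _ _ hab
  intro x
  split_ifs with hx
  · apply int1 _ _ _ _ (hl x hx.1 hx.2)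
    intro y; rw [h]; simp [hx]
  · simp only [h, hx, false_and, if_false, integral_zero]

/-- total integral -/
noncomputable def E (f : ℝ → ℝ → ℝ → ℝ) : ℝ := ∫ q : ℝ × ℝ × ℝ, f q.1 q.2.1 q.2.2

lemma int3 (f : ℝ → ℝ → ℝ → ℝ) (hf : Integrable (fun q : ℝ × ℝ × ℝ => f q.1 q.2.1 q.2.2)) (a b : ℝ)
    (l u : ℝ → ℝ) (l' u' : ℝ → ℝ → ℝ)
    (P : ℝ → ℝ → ℝ → ℝ) (hab : a ≤ b) (hl : ∀ x, a < x → x ≤ b → l x ≤ u x)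
    (hl' : ∀ x y, a < x → x ≤ b → l x < y → y ≤ u x → l' x y ≤ u' x y)
    (h : ∀ x y z, f x y z = if (a < x ∧ x ≤ b) ∧ (l x < y ∧ y ≤ u x) ∧ (l' x y < z ∧ z ≤ u' x y)
      then P x y z else 0) :
    E f = ∫ x in a..b, ∫ y in (l x)..(u x), ∫ z in (l' x y)..(u' x y), P x y z := by
  have e : E f = ∫ x, ∫ q : ℝ × ℝ, f x q.1 q.2 := integral_prod _ hf
  have e2 : E f = ∫ x, ∫ y, ∫ z, f x y z := by
    rw [e]
    apply integral_congr_ae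
    filter_upwards [hf.prod_right_ae] with x hx
    exact integral_prod (fun q : ℝ × ℝ => f x q.1 q.2) hx
  rw [e2]
  apply int1 _ _ _ _ hab
  intro x
  split_ifs with hx
  · apply int1 _ _ _ _ (hl x hx.1 hx.2)
    intro y
    split_ifs with hy
    · apply int1 _ _ _ _ (hl' x y hx.1 hx.2 hy.1 hy.2)
      intro z; rw [h]; simp [hx, hy]
    · simp only [h, hy, false_and, and_false, if_false, integral_zero]
  · simp only [h, hx, false_and, if_false, integral_zero]

lemma E_p23 (f : ℝ → ℝ → ℝ → ℝ) : E (fun x y z => f x z y) = E f := by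
  have h := (MeasurePreserving.id (volume : Measure ℝ)).prod
    (Measure.measurePreserving_swap (μ := (volume : Measure ℝ)) (ν := (volume : Measure ℝ)))
  exact h.integral_comp (MeasurableEquiv.prodCongr (MeasurableEquiv.refl ℝ)
    (MeasurableEquiv.prodComm (α := ℝ) (β := ℝ))).measurableEmbedding
    (fun q : ℝ × ℝ × ℝ => f q.1 q.2.1 q.2.2)

lemma E_assoc (f : ℝ → ℝ → ℝ → ℝ) : E f = ∫ r : (ℝ × ℝ) × ℝ, f r.1.1 r.1.2 r.2 := by
  exact ((volume_preserving_prodAssoc (α₁ := ℝ) (β₁ := ℝ) (γ₁ := ℝ)).integral_comp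
    (MeasurableEquiv.measurableEmbedding _) (fun q : ℝ × ℝ × ℝ => f q.1 q.2.1 q.2.2)).symm

lemma E_p12 (f : ℝ → ℝ → ℝ → ℝ) : E (fun x y z => f y x z) = E f := by
  rw [E_assoc, E_assoc]
  have h := (Measure.measurePreserving_swap (μ := (volume : Measure ℝ)) (ν := (volume : Measure ℝ))).prod
    (MeasurePreserving.id (volume : Measure ℝ))
  exact h.integral_comp (MeasurableEquiv.prodCongr 
    (MeasurableEquiv.prodComm (α := ℝ) (β := ℝ)) (MeasurableEquiv.refl ℝ)).measurableEmbedding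
    (fun r : (ℝ × ℝ) × ℝ => f r.1.1 r.1.2 r.2)

/-- bounded measurable -/
structure B (f : ℝ → ℝ → ℝ → ℝ) : Prop where
  meas : Measurable fun q : ℝ × ℝ × ℝ => f q.1 q.2.1 q.2.2
  bdd : ∃ C, ∀ x y z, |f x y z| ≤ C

/-- bounded measurable with bounded support -/
structure N (f : ℝ → ℝ → ℝ → ℝ) : Prop extends B f where
  supp : ∀ x y z, f x y z ≠ 0 → (|x| ≤ 2 ∧ |y| ≤ 2 ∧ |z| ≤ 2)

lemma B.add {f g} (hf : B f) (hg : B g) : B (fun x y z => f x y z + g x y z) := by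
  refine ⟨hf.meas.add hg.meas, ?_⟩
  obtain ⟨C, hC⟩ := hf.bdd
  obtain ⟨D, hD⟩ := hg.bdd
  exact ⟨C + D, fun x y z => (abs_add_le _ _).trans (add_le_add (hC x y z) (hD x y z))⟩

lemma B.mul {f g} (hf : B f) (hg : B g) : B (fun x y z => f x y z * g x y z) := by
  refine ⟨hf.meas.mul hg.meas, ?_⟩
  obtain ⟨C, hC⟩ := hf.bdd
  obtain ⟨D, hD⟩ := hg.bdd
  refine ⟨C * D, fun x y z => ?_⟩
  rw [abs_mul]
  exact mul_le_mul (hC x y z) (hD x y z) (abs_nonneg _) ((abs_nonneg _).trans (hC x y z))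

lemma B.const (c : ℝ) : B (fun _ _ _ => c) := ⟨measurable_const, |c|, fun _ _ _ => le_rfl⟩

lemma B.p12 {f} (hf : B f) : B (fun x y z => f y x z) := by
  refine ⟨?_, ?_⟩
  · exact hf.meas.comp (by fun_prop : Measurable fun q : ℝ × ℝ × ℝ => (q.2.1, q.1, q.2.2))
  · obtain ⟨C, hC⟩ := hf.bdd
    exact ⟨C, fun x y z => hC _ _ _⟩

lemma B.p23 {f} (hf : B f) : B (fun x y z => f x z y) := by
  refine ⟨?_, ?_⟩
  · exact hf.meas.comp (by fun_prop : Measurable fun q : ℝ × ℝ × ℝ => (q.1, q.2.2, q.2.1))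
  · obtain ⟨C, hC⟩ := hf.bdd
    exact ⟨C, fun x y z => hC _ _ _⟩

lemma N.p12 {f} (hf : N f) : N (fun x y z => f y x z) :=
  ⟨hf.toB.p12, fun x y z h => by have := hf.supp _ _ _ h; tauto⟩

lemma N.p23 {f} (hf : N f) : N (fun x y z => f x z y) :=
  ⟨hf.toB.p23, fun x y z h => by have := hf.supp _ _ _ h; tauto⟩

lemma N.add {f g} (hf : N f) (hg : N g) : N (fun x y z => f x y z + g x y z) := by
  refine ⟨hf.toB.add hg.toB, fun x y z h => ?_⟩
  by_cases h1 : f x y z = 0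
  · exact hg.supp x y z (fun h2 => h (by rw [h1, h2, add_zero]))
  · exact hf.supp x y z h1

lemma N.mul {f g} (hf : N f) (hg : B g) : N (fun x y z => f x y z * g x y z) :=
  ⟨hf.toB.mul hg, fun x y z h => hf.supp x y z (left_ne_zero_of_mul h)⟩

lemma N.smul {f} (c : ℝ) (hf : N f) : N (fun x y z => c * f x y z) :=
  ⟨(B.const c).mul hf.toB, fun x y z h => hf.supp x y z (right_ne_zero_of_mul h)⟩

lemma N.sub {f g} (hf : N f) (hg : N g) : N (fun x y z => f x y z - g x y z) := by
  have := hf.add (hg.smul (-1))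
  simpa [sub_eq_add_neg] using this

lemma N.int {f} (hf : N f) : Integrable (fun q : ℝ × ℝ × ℝ => f q.1 q.2.1 q.2.2) := by
  obtain ⟨C, hC⟩ := hf.bdd
  have hK : IsCompact (Set.Icc (-2 : ℝ) 2 ×ˢ (Set.Icc (-2 : ℝ) 2 ×ˢ Set.Icc (-2 : ℝ) 2)) :=
    isCompact_Icc.prod (isCompact_Icc.prod isCompact_Icc)
  rw [← integrableOn_iff_integrable_of_support_subset
    (s := Set.Icc (-2 : ℝ) 2 ×ˢ (Set.Icc (-2 : ℝ) 2 ×ˢ Set.Icc (-2 : ℝ) 2))]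
  · exact Measure.integrableOn_of_bounded (M := C) hK.measure_lt_top.ne
      hf.meas.aestronglyMeasurable (Filter.Eventually.of_forall fun q => hC _ _ _)
  · intro q hq
    obtain ⟨h1, h2, h3⟩ := hf.supp _ _ _ hq
    rw [abs_le] at h1 h2 h3
    exact ⟨h1, h2, h3⟩

lemma N.ite (c : ℝ → ℝ → ℝ → Prop) [∀ x y z, Decidable (c x y z)] (P : ℝ → ℝ → ℝ → ℝ)
    (hm : MeasurableSet {q : ℝ × ℝ × ℝ | c q.1 q.2.1 q.2.2})
    (hs : ∀ x y z, c x y z → (|x| ≤ 2 ∧ |y| ≤ 2 ∧ |z| ≤ 2))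
    (hP : Continuous fun q : ℝ × ℝ × ℝ => P q.1 q.2.1 q.2.2) :
    N (fun x y z => if c x y z then P x y z else 0) := by
  have hK : IsCompact (Set.Icc (-2 : ℝ) 2 ×ˢ (Set.Icc (-2 : ℝ) 2 ×ˢ Set.Icc (-2 : ℝ) 2)) :=
    isCompact_Icc.prod (isCompact_Icc.prod isCompact_Icc)
  obtain ⟨C, hC⟩ := hK.exists_bound_of_continuousOn hP.continuousOn
  refine ⟨⟨Measurable.ite hm hP.measurable measurable_const, max C 0, fun x y z => ?_⟩, 
    fun x y z h => ?_⟩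
  · split_ifs with h
    · obtain ⟨h1, h2, h3⟩ := hs _ _ _ h
      rw [abs_le] at h1 h2 h3
      exact (hC (x, y, z) ⟨h1, h2, h3⟩).trans (le_max_left _ _)
    · simp
  · by_contra h'
    exact h (if_neg fun hcc => h' (hs _ _ _ hcc))

lemma E_add {f g} (hf : N f) (hg : N g) : E (fun x y z => f x y z + g x y z) = E f + E g :=
  integral_add hf.int hg.int
lemma E_sub {f g} (hf : N f) (hg : N g) : E (fun x y z => f x y z - g x y z) = E f - E g :=
  integral_sub hf.int hg.int
lemma E_smul {f} (c : ℝ) : E (fun x y z => c * f x y z) = c * E f :=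
  integral_const_mul _ _
lemma E_mono {f g} (hf : N f) (hg : N g) (h : ∀ x y z, f x y z ≤ g x y z) : E f ≤ E g :=
  integral_mono hf.int hg.int (fun _ => h _ _ _)


/-- the basic quadratic polynomial -/
noncomputable def pp (x y : ℝ) : ℝ := 4 - 7 * (x + y) + 4 * (x + y) ^ 2 - x * y

lemma ev_A1 : ∫ x in (0 : ℝ)..((1/4) : ℝ), ∫ y in (1*x : ℝ)..((3/4) + (-1)*x : ℝ), ∫ z in (0 : ℝ)..((5/4) + (-1)*y : ℝ), pp x y * pp x y = (1138651/2949120) := by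
  have hz : ∀ x y : ℝ, ∫ z in (0 : ℝ)..((5/4) + (-1)*y : ℝ), pp x y * pp x y = ((20 + (-70)*x + (405/4)*x^2 + (-70)*x^3 + 20*x^4 : ℝ) + ((-86) + (497/2)*x + (-547/2)*x^2 + 126*x^3 + (-16)*x^4 : ℝ)*y + ((629/4) + (-693/2)*x + (1021/4)*x^2 + (-56)*x^3 : ℝ)*y^2 + ((-151) + 224*x + (-81)*x^2 : ℝ)*y^3 + (76 + (-56)*x : ℝ)*y^4 + ((-16) : ℝ)*y^5 + (0 : ℝ)*y^6) := by
    intro x y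
    calc _ = ∫ z in (0 : ℝ)..((5/4) + (-1)*y : ℝ), ((16 + (-56)*y + 81*y^2 + (-56)*y^3 + 16*y^4 + (-56)*x + 154*x*y + (-154)*x*y^2 + 56*x*y^3 + 81*x^2 + (-154)*x^2*y + 81*x^2*y^2 + (-56)*x^3 + 56*x^3*y + 16*x^4 : ℝ) + (0 : ℝ)*z + (0 : ℝ)*z^2 + (0 : ℝ)*z^3 + (0 : ℝ)*z^4 + (0 : ℝ)*z^5 + (0 : ℝ)*z^6) := by
          congr 1; ext z; try simp only [pp]
          ring
      _ = _ := by rw [pint]; ring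
  have hy : ∀ x : ℝ, ∫ y in (1*x : ℝ)..((3/4) + (-1)*x : ℝ), ((20 + (-70)*x + (405/4)*x^2 + (-70)*x^3 + 20*x^4 : ℝ) + ((-86) + (497/2)*x + (-547/2)*x^2 + 126*x^3 + (-16)*x^4 : ℝ)*y + ((629/4) + (-693/2)*x + (1021/4)*x^2 + (-56)*x^3 : ℝ)*y^2 + ((-151) + 224*x + (-81)*x^2 : ℝ)*y^3 + (76 + (-56)*x : ℝ)*y^4 + ((-16) : ℝ)*y^5 + (0 : ℝ)*y^6) = (((21063/5120) : ℝ) + ((-1471/40) : ℝ)*x + ((145667/1024) : ℝ)*x^2 + ((-29225/96) : ℝ)*x^3 + ((11875/32) : ℝ)*x^4 + ((-14389/60) : ℝ)*x^5 + ((896/15) : ℝ)*x^6) := by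
    intro x; rw [pint]; ring
  simp_rw [hz, hy]
  rw [pint]; norm_num

lemma ev_A2 : ∫ x in ((1/4) : ℝ)..((3/8) : ℝ), ∫ y in (1*x : ℝ)..((3/4) + (-1)*x : ℝ), ∫ z in (0 : ℝ)..((3/2) + (-1)*y + (-1)*x : ℝ), pp x y * pp x y = (40921/2949120) := by
  have hz : ∀ x y : ℝ, ∫ z in (0 : ℝ)..((3/2) + (-1)*y + (-1)*x : ℝ), pp x y * pp x y = ((24 + (-100)*x + (355/2)*x^2 + (-165)*x^3 + 80*x^4 + (-16)*x^5 : ℝ) + ((-100) + 343*x + (-466)*x^2 + 294*x^3 + (-72)*x^4 : ℝ)*y + ((355/2) + (-466)*x + (859/2)*x^2 + (-137)*x^3 : ℝ)*y^2 + ((-165) + 294*x + (-137)*x^2 : ℝ)*y^3 + (80 + (-72)*x : ℝ)*y^4 + ((-16) : ℝ)*y^5 + (0 : ℝ)*y^6) := by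
    intro x y
    calc _ = ∫ z in (0 : ℝ)..((3/2) + (-1)*y + (-1)*x : ℝ), ((16 + (-56)*y + 81*y^2 + (-56)*y^3 + 16*y^4 + (-56)*x + 154*x*y + (-154)*x*y^2 + 56*x*y^3 + 81*x^2 + (-154)*x^2*y + 81*x^2*y^2 + (-56)*x^3 + 56*x^3*y + 16*x^4 : ℝ) + (0 : ℝ)*z + (0 : ℝ)*z^2 + (0 : ℝ)*z^3 + (0 : ℝ)*z^4 + (0 : ℝ)*z^5 + (0 : ℝ)*z^6) := by
          congr 1; ext z; try simp only [pp]
          ring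
      _ = _ := by rw [pint]; ring
  have hy : ∀ x : ℝ, ∫ y in (1*x : ℝ)..((3/4) + (-1)*x : ℝ), ((24 + (-100)*x + (355/2)*x^2 + (-165)*x^3 + 80*x^4 + (-16)*x^5 : ℝ) + ((-100) + 343*x + (-466)*x^2 + 294*x^3 + (-72)*x^4 : ℝ)*y + ((355/2) + (-466)*x + (859/2)*x^2 + (-137)*x^3 : ℝ)*y^2 + ((-165) + 294*x + (-137)*x^2 : ℝ)*y^3 + (80 + (-72)*x : ℝ)*y^4 + ((-16) : ℝ)*y^5 + (0 : ℝ)*y^6) = (((5229/1024) : ℝ) + ((-125373/2560) : ℝ)*x + ((208895/1024) : ℝ)*x^2 + ((-22747/48) : ℝ)*x^3 + ((61585/96) : ℝ)*x^4 + ((-1435/3) : ℝ)*x^5 + ((2282/15) : ℝ)*x^6) := by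
    intro x; rw [pint]; ring
  simp_rw [hz, hy]
  rw [pint]; norm_num

lemma ev_C1 : ∫ x in (0 : ℝ)..((3/4) : ℝ), ∫ y in (0 : ℝ)..((3/4) + (-1)*x : ℝ), ∫ z in (0 : ℝ)..((3/4) + (-1)*x : ℝ), pp x y * pp x z = (946989/2293760) := by
  have hz : ∀ x y : ℝ, ∫ z in (0 : ℝ)..((3/4) + (-1)*x : ℝ), pp x y * pp x z = (((51/8) + (-905/32)*x + (1707/32)*x^2 + (-1301/24)*x^3 + (179/6)*x^4 + (-22/3)*x^5 : ℝ) + ((-357/32) + (329/8)*x + (-1911/32)*x^2 + (511/12)*x^3 + (-77/6)*x^4 : ℝ)*y + ((51/8) + (-137/8)*x + 17*x^2 + (-22/3)*x^3 : ℝ)*y^2 + (0 : ℝ)*y^3 + (0 : ℝ)*y^4 + (0 : ℝ)*y^5 + (0 : ℝ)*y^6) := by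
    intro x y
    calc _ = ∫ z in (0 : ℝ)..((3/4) + (-1)*x : ℝ), ((16 + (-28)*y + 16*y^2 + (-56)*x + 77*x*y + (-28)*x*y^2 + 81*x^2 + (-77)*x^2*y + 16*x^2*y^2 + (-56)*x^3 + 28*x^3*y + 16*x^4 : ℝ) + ((-28) + 49*y + (-28)*y^2 + 77*x + (-98)*x*y + 28*x*y^2 + (-77)*x^2 + 49*x^2*y + 28*x^3 : ℝ)*z + (16 + (-28)*y + 16*y^2 + (-28)*x + 28*x*y + 16*x^2 : ℝ)*z^2 + (0 : ℝ)*z^3 + (0 : ℝ)*z^4 + (0 : ℝ)*z^5 + (0 : ℝ)*z^6) := by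
          congr 1; ext z; try simp only [pp]
          ring
      _ = _ := by rw [pint]; ring
  have hy : ∀ x : ℝ, ∫ y in (0 : ℝ)..((3/4) + (-1)*x : ℝ), (((51/8) + (-905/32)*x + (1707/32)*x^2 + (-1301/24)*x^3 + (179/6)*x^4 + (-22/3)*x^5 : ℝ) + ((-357/32) + (329/8)*x + (-1911/32)*x^2 + (511/12)*x^3 + (-77/6)*x^4 : ℝ)*y + ((51/8) + (-137/8)*x + 17*x^2 + (-22/3)*x^3 : ℝ)*y^2 + (0 : ℝ)*y^3 + (0 : ℝ)*y^4 + (0 : ℝ)*y^5 + (0 : ℝ)*y^6) = (((2601/1024) : ℝ) + ((-6987/512) : ℝ)*x + ((32641/1024) : ℝ)*x^2 + ((-2703/64) : ℝ)*x^3 + ((3241/96) : ℝ)*x^4 + ((-187/12) : ℝ)*x^5 + ((121/36) : ℝ)*x^6) := by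
    intro x; rw [pint]; ring
  simp_rw [hz, hy]
  rw [pint]; norm_num

lemma ev_C2 : ∫ x in (0 : ℝ)..((1/8) : ℝ), ∫ y in ((1/2) + 1*x : ℝ)..((3/4) + (-1)*x : ℝ), ∫ z in ((5/4) + (-1)*y : ℝ)..((3/4) + (-1)*x : ℝ), pp x y * pp x z = (12233/8257536) := by
  have hz : ∀ x y : ℝ, ∫ z in ((5/4) + (-1)*y : ℝ)..((3/4) + (-1)*x : ℝ), pp x y * pp x z = (((-13/6) + (-5/24)*x + (11/6)*x^2 + (-73/12)*x^3 + (59/6)*x^4 + (-22/3)*x^5 : ℝ) + ((235/24) + (-7/24)*x + 8*x^2 + (-161/12)*x^3 + (19/6)*x^4 : ℝ)*y + ((-56/3) + (-37/4)*x + (-1/4)*x^2 + (20/3)*x^3 : ℝ)*y^2 + ((131/6) + (35/3)*x + (-19/6)*x^2 : ℝ)*y^3 + ((-46/3) + (-14/3)*x : ℝ)*y^4 + ((16/3) : ℝ)*y^5 + (0 : ℝ)*y^6) := by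
    intro x y
    calc _ = ∫ z in ((5/4) + (-1)*y : ℝ)..((3/4) + (-1)*x : ℝ), ((16 + (-28)*y + 16*y^2 + (-56)*x + 77*x*y + (-28)*x*y^2 + 81*x^2 + (-77)*x^2*y + 16*x^2*y^2 + (-56)*x^3 + 28*x^3*y + 16*x^4 : ℝ) + ((-28) + 49*y + (-28)*y^2 + 77*x + (-98)*x*y + 28*x*y^2 + (-77)*x^2 + 49*x^2*y + 28*x^3 : ℝ)*z + (16 + (-28)*y + 16*y^2 + (-28)*x + 28*x*y + 16*x^2 : ℝ)*z^2 + (0 : ℝ)*z^3 + (0 : ℝ)*z^4 + (0 : ℝ)*z^5 + (0 : ℝ)*z^6) := by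
          congr 1; ext z; try simp only [pp]
          ring
      _ = _ := by rw [pint]; ring
  have hy : ∀ x : ℝ, ∫ y in ((1/2) + 1*x : ℝ)..((3/4) + (-1)*x : ℝ), (((-13/6) + (-5/24)*x + (11/6)*x^2 + (-73/12)*x^3 + (59/6)*x^4 + (-22/3)*x^5 : ℝ) + ((235/24) + (-7/24)*x + 8*x^2 + (-161/12)*x^3 + (19/6)*x^4 : ℝ)*y + ((-56/3) + (-37/4)*x + (-1/4)*x^2 + (20/3)*x^3 : ℝ)*y^2 + ((131/6) + (35/3)*x + (-19/6)*x^2 : ℝ)*y^3 + ((-46/3) + (-14/3)*x : ℝ)*y^4 + ((16/3) : ℝ)*y^5 + (0 : ℝ)*y^6) = (((3629/92160) : ℝ) + ((-11779/15360) : ℝ)*x + ((30821/6144) : ℝ)*x^2 + ((-8039/576) : ℝ)*x^3 + ((2345/96) : ℝ)*x^4 + ((-641/30) : ℝ)*x^5 + ((544/45) : ℝ)*x^6) := by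
    intro x; rw [pint]; ring
  simp_rw [hz, hy]
  rw [pint]; norm_num

lemma ev_E1v : ∫ x in (0 : ℝ)..((1/8) : ℝ), ∫ y in ((1/2) + 1*x : ℝ)..((3/4) + (-1)*x : ℝ), ∫ z in ((5/4) + (-1)*y : ℝ)..((3/4) + (-1)*x : ℝ), (1 : ℝ) = (1/768) := by
  have hz : ∀ x y : ℝ, ∫ z in ((5/4) + (-1)*y : ℝ)..((3/4) + (-1)*x : ℝ), (1 : ℝ) = (((-1/2) + (-1)*x : ℝ) + (1 : ℝ)*y + (0 : ℝ)*y^2 + (0 : ℝ)*y^3 + (0 : ℝ)*y^4 + (0 : ℝ)*y^5 + (0 : ℝ)*y^6) := by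
    intro x y
    calc _ = ∫ z in ((5/4) + (-1)*y : ℝ)..((3/4) + (-1)*x : ℝ), ((1 : ℝ) + (0 : ℝ)*z + (0 : ℝ)*z^2 + (0 : ℝ)*z^3 + (0 : ℝ)*z^4 + (0 : ℝ)*z^5 + (0 : ℝ)*z^6) := by
          congr 1; ext z; try simp only [pp]
          ring
      _ = _ := by rw [pint]; ring
  have hy : ∀ x : ℝ, ∫ y in ((1/2) + 1*x : ℝ)..((3/4) + (-1)*x : ℝ), (((-1/2) + (-1)*x : ℝ) + (1 : ℝ)*y + (0 : ℝ)*y^2 + (0 : ℝ)*y^3 + (0 : ℝ)*y^4 + (0 : ℝ)*y^5 + (0 : ℝ)*y^6) = (((1/32) : ℝ) + ((-1/2) : ℝ)*x + (2 : ℝ)*x^2 + (0 : ℝ)*x^3 + (0 : ℝ)*x^4 + (0 : ℝ)*x^5 + (0 : ℝ)*x^6) := by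
    intro x; rw [pint]; ring
  simp_rw [hz, hy]
  rw [pint]; norm_num

lemma ev_E1g : ∫ x in (0 : ℝ)..((1/8) : ℝ), ∫ y in ((1/2) + 1*x : ℝ)..((3/4) + (-1)*x : ℝ), ∫ z in ((5/4) + (-1)*y : ℝ)..((3/4) + (-1)*x : ℝ), pp x y = (683/491520) := by
  have hz : ∀ x y : ℝ, ∫ z in ((5/4) + (-1)*y : ℝ)..((3/4) + (-1)*x : ℝ), pp x y = (((-2) + (-1/2)*x + 5*x^2 + (-4)*x^3 : ℝ) + ((15/2) + (-7/2)*x + (-3)*x^2 : ℝ)*y + ((-9) + 3*x : ℝ)*y^2 + (4 : ℝ)*y^3 + (0 : ℝ)*y^4 + (0 : ℝ)*y^5 + (0 : ℝ)*y^6) := by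
    intro x y
    calc _ = ∫ z in ((5/4) + (-1)*y : ℝ)..((3/4) + (-1)*x : ℝ), ((4 + (-7)*y + 4*y^2 + (-7)*x + 7*x*y + 4*x^2 : ℝ) + (0 : ℝ)*z + (0 : ℝ)*z^2 + (0 : ℝ)*z^3 + (0 : ℝ)*z^4 + (0 : ℝ)*z^5 + (0 : ℝ)*z^6) := by
          congr 1; ext z; try simp only [pp]
          ring
      _ = _ := by rw [pint]; ring
  have hy : ∀ x : ℝ, ∫ y in ((1/2) + 1*x : ℝ)..((3/4) + (-1)*x : ℝ), (((-2) + (-1/2)*x + 5*x^2 + (-4)*x^3 : ℝ) + ((15/2) + (-7/2)*x + (-3)*x^2 : ℝ)*y + ((-9) + 3*x : ℝ)*y^2 + (4 : ℝ)*y^3 + (0 : ℝ)*y^4 + (0 : ℝ)*y^5 + (0 : ℝ)*y^6) = (((9/256) : ℝ) + ((-5/8) : ℝ)*x + ((107/32) : ℝ)*x^2 + ((-11/2) : ℝ)*x^3 + (6 : ℝ)*x^4 + (0 : ℝ)*x^5 + (0 : ℝ)*x^6) := by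
    intro x; rw [pint]; ring
  simp_rw [hz, hy]
  rw [pint]; norm_num

lemma ev_DD : ∫ x in (1 : ℝ)..((5/4) : ℝ), ∫ y in ((5/4) + (-1)*x : ℝ)..((1/4) : ℝ), ∫ z in ((5/4) + (-1)*x : ℝ)..((3/2) + (-1)*y + (-1)*x : ℝ), (5/4 - x) * (5/4 - x) = (1/61440) := by
  have hz : ∀ x y : ℝ, ∫ z in ((5/4) + (-1)*x : ℝ)..((3/2) + (-1)*y + (-1)*x : ℝ), (5/4 - x) * (5/4 - x) = (((25/64) + (-5/8)*x + (1/4)*x^2 : ℝ) + ((-25/16) + (5/2)*x + (-1)*x^2 : ℝ)*y + (0 : ℝ)*y^2 + (0 : ℝ)*y^3 + (0 : ℝ)*y^4 + (0 : ℝ)*y^5 + (0 : ℝ)*y^6) := by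
    intro x y
    calc _ = ∫ z in ((5/4) + (-1)*x : ℝ)..((3/2) + (-1)*y + (-1)*x : ℝ), (((25/16) + (-5/2)*x + 1*x^2 : ℝ) + (0 : ℝ)*z + (0 : ℝ)*z^2 + (0 : ℝ)*z^3 + (0 : ℝ)*z^4 + (0 : ℝ)*z^5 + (0 : ℝ)*z^6) := by
          congr 1; ext z; try simp only [pp]
          ring
      _ = _ := by rw [pint]; ring
  have hy : ∀ x : ℝ, ∫ y in ((5/4) + (-1)*x : ℝ)..((1/4) : ℝ), (((25/64) + (-5/8)*x + (1/4)*x^2 : ℝ) + ((-25/16) + (5/2)*x + (-1)*x^2 : ℝ)*y + (0 : ℝ)*y^2 + (0 : ℝ)*y^3 + (0 : ℝ)*y^4 + (0 : ℝ)*y^5 + (0 : ℝ)*y^6) = (((25/32) : ℝ) + ((-45/16) : ℝ)*x + ((121/32) : ℝ)*x^2 + ((-9/4) : ℝ)*x^3 + ((1/2) : ℝ)*x^4 + (0 : ℝ)*x^5 + (0 : ℝ)*x^6) := by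
    intro x; rw [pint]; ring
  simp_rw [hz, hy]
  rw [pint]; norm_num

lemma ev_SS : ∫ x in (1 : ℝ)..((5/4) : ℝ), ∫ y in ((5/4) + (-1)*x : ℝ)..((1/4) : ℝ), ∫ z in (0 : ℝ)..((5/4) + (-1)*x : ℝ), (1/4 - y) * (1/4 - y) = (1/61440) := by
  have hz : ∀ x y : ℝ, ∫ z in (0 : ℝ)..((5/4) + (-1)*x : ℝ), (1/4 - y) * (1/4 - y) = (((5/64) + (-1/16)*x : ℝ) + ((-5/8) + (1/2)*x : ℝ)*y + ((5/4) + (-1)*x : ℝ)*y^2 + (0 : ℝ)*y^3 + (0 : ℝ)*y^4 + (0 : ℝ)*y^5 + (0 : ℝ)*y^6) := by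
    intro x y
    calc _ = ∫ z in (0 : ℝ)..((5/4) + (-1)*x : ℝ), (((1/16) + (-1/2)*y + 1*y^2 : ℝ) + (0 : ℝ)*z + (0 : ℝ)*z^2 + (0 : ℝ)*z^3 + (0 : ℝ)*z^4 + (0 : ℝ)*z^5 + (0 : ℝ)*z^6) := by
          congr 1; ext z; try simp only [pp]
          ring
      _ = _ := by rw [pint]; ring
  have hy : ∀ x : ℝ, ∫ y in ((5/4) + (-1)*x : ℝ)..((1/4) : ℝ), (((5/64) + (-1/16)*x : ℝ) + ((-5/8) + (1/2)*x : ℝ)*y + ((5/4) + (-1)*x : ℝ)*y^2 + (0 : ℝ)*y^3 + (0 : ℝ)*y^4 + (0 : ℝ)*y^5 + (0 : ℝ)*y^6) = (((-5/12) : ℝ) + ((19/12) : ℝ)*x + ((-9/4) : ℝ)*x^2 + ((17/12) : ℝ)*x^3 + ((-1/3) : ℝ)*x^4 + (0 : ℝ)*x^5 + (0 : ℝ)*x^6) := by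
    intro x; rw [pint]; ring
  simp_rw [hz, hy]
  rw [pint]; norm_num

lemma ev_Dg : ∫ x in (1 : ℝ)..((5/4) : ℝ), ∫ y in ((5/4) + (-1)*x : ℝ)..((1/4) : ℝ), ∫ z in ((5/4) + (-1)*x : ℝ)..((3/2) + (-1)*y + (-1)*x : ℝ), (5/4 - x) * pp y z = (217/589824) := by
  have hz : ∀ x y : ℝ, ∫ z in ((5/4) + (-1)*x : ℝ)..((3/2) + (-1)*y + (-1)*x : ℝ), (5/4 - x) * pp y z = (((235/384) + (-167/96)*x + (9/4)*x^2 + (-1)*x^3 : ℝ) + ((-295/128) + (189/32)*x + (-33/4)*x^2 + 4*x^3 : ℝ)*y + ((15/4)*x + (-3)*x^2 : ℝ)*y^2 + ((-55/24) + (11/6)*x : ℝ)*y^3 + (0 : ℝ)*y^4 + (0 : ℝ)*y^5 + (0 : ℝ)*y^6) := by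
    intro x y
    calc _ = ∫ z in ((5/4) + (-1)*x : ℝ)..((3/2) + (-1)*y + (-1)*x : ℝ), ((5 + (-35/4)*y + 5*y^2 + (-4)*x + 7*x*y + (-4)*x*y^2 : ℝ) + ((-35/4) + (35/4)*y + 7*x + (-7)*x*y : ℝ)*z + (5 + (-4)*x : ℝ)*z^2 + (0 : ℝ)*z^3 + (0 : ℝ)*z^4 + (0 : ℝ)*z^5 + (0 : ℝ)*z^6) := by
          congr 1; ext z; try simp only [pp]
          ring
      _ = _ := by rw [pint]; ring
  have hy : ∀ x : ℝ, ∫ y in ((5/4) + (-1)*x : ℝ)..((1/4) : ℝ), (((235/384) + (-167/96)*x + (9/4)*x^2 + (-1)*x^3 : ℝ) + ((-295/128) + (189/32)*x + (-33/4)*x^2 + 4*x^3 : ℝ)*y + ((15/4)*x + (-3)*x^2 : ℝ)*y^2 + ((-55/24) + (11/6)*x : ℝ)*y^3 + (0 : ℝ)*y^4 + (0 : ℝ)*y^5 + (0 : ℝ)*y^6) = (((965/384) : ℝ) + ((-2491/192) : ℝ)*x + ((10553/384) : ℝ)*x^2 + ((-2837/96) : ℝ)*x^3 + ((1535/96) :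 ℝ)*x^4 + ((-83/24) : ℝ)*x^5 + (0 : ℝ)*x^6) := by
    intro x; rw [pint]; ring
  simp_rw [hz, hy]
  rw [pint]; norm_num

lemma ev_Sg : ∫ x in (1 : ℝ)..((5/4) : ℝ), ∫ y in ((5/4) + (-1)*x : ℝ)..((1/4) : ℝ), ∫ z in (0 : ℝ)..((5/4) + (-1)*x : ℝ), (1/4 - y) * pp y z = (37/81920) := by
  have hz : ∀ x y : ℝ, ∫ z in (0 : ℝ)..((5/4) + (-1)*x : ℝ), (1/4 - y) * pp y z = (((205/384) + (-3/8)*x + (3/8)*x^2 + (-1/3)*x^3 : ℝ) + ((-1135/384) + (17/16)*x + (-5/8)*x^2 + (4/3)*x^3 : ℝ)*y + ((145/32) + (3/4)*x + (-7/2)*x^2 : ℝ)*y^2 + ((-5) + 4*x : ℝ)*y^3 + (0 : ℝ)*y^4 + (0 : ℝ)*y^5 + (0 : ℝ)*y^6) := by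
    intro x y
    calc _ = ∫ z in (0 : ℝ)..((5/4) + (-1)*x : ℝ), ((1 + (-23/4)*y + 8*y^2 + (-4)*y^3 : ℝ) + ((-7/4) + (35/4)*y + (-7)*y^2 : ℝ)*z + (1 + (-4)*y : ℝ)*z^2 + (0 : ℝ)*z^3 + (0 : ℝ)*z^4 + (0 : ℝ)*z^5 + (0 : ℝ)*z^6) := by
          congr 1; ext z; try simp only [pp]
          ring
      _ = _ := by rw [pint]; ring
  have hy : ∀ x : ℝ, ∫ y in ((5/4) + (-1)*x : ℝ)..((1/4) : ℝ), (((205/384) + (-3/8)*x + (3/8)*x^2 + (-1/3)*x^3 : ℝ) + ((-1135/384) + (17/16)*x + (-5/8)*x^2 + (4/3)*x^3 : ℝ)*y + ((145/32) + (3/4)*x + (-7/2)*x^2 : ℝ)*y^2 + ((-5) + 4*x : ℝ)*y^3 + (0 : ℝ)*y^4 + (0 : ℝ)*y^5 + (0 : ℝ)*y^6) = (((1385/768) : ℝ) + ((-3529/384) : ℝ)*x + ((5075/256) : ℝ)*x^2 + ((-177/8) : ℝ)*x^3 + ((601/48) : ℝ)*x^4 + ((-17/6) : ℝ)*x^5 +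 (0 : ℝ)*x^6) := by
    intro x; rw [pint]; ring
  simp_rw [hz, hy]
  rw [pint]; norm_num

lemma ev_G : ∫ x in (0 : ℝ)..((3/4) : ℝ), ∫ y in (0 : ℝ)..((3/4) + (-1)*x : ℝ), pp x y * pp x y = (13365/16384) := by
  have hz : ∀ x y : ℝ, pp x y * pp x y = ((16 + (-56)*x + 81*x^2 + (-56)*x^3 + 16*x^4 : ℝ) + ((-56) + 154*x + (-154)*x^2 + 56*x^3 : ℝ)*y + (81 + (-154)*x + 81*x^2 : ℝ)*y^2 + ((-56) + 56*x : ℝ)*y^3 + (16 : ℝ)*y^4 + (0 : ℝ)*y^5 + (0 : ℝ)*y^6) := by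
    intro x y; simp only [pp]; ring
  have hy : ∀ x : ℝ, ∫ y in (0 : ℝ)..((3/4) + (-1)*x : ℝ), ((16 + (-56)*x + 81*x^2 + (-56)*x^3 + 16*x^4 : ℝ) + ((-56) + 154*x + (-154)*x^2 + 56*x^3 : ℝ)*y + (81 + (-154)*x + 81*x^2 : ℝ)*y^2 + ((-56) + 56*x : ℝ)*y^3 + (16 : ℝ)*y^4 + (0 : ℝ)*y^5 + (0 : ℝ)*y^6) = (((2541/640) : ℝ) + ((-2165/128) : ℝ)*x + ((2005/64) : ℝ)*x^2 + ((-505/16) : ℝ)*x^3 + ((205/12) : ℝ)*x^4 + ((-21/5) : ℝ)*x^5 + (0 : ℝ)*x^6) := by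
    intro x; rw [pint]; ring
  simp_rw [hz, hy]
  rw [pint]; norm_num


noncomputable def g (x y : ℝ) : ℝ := if 0 < x ∧ 0 < y ∧ x + y ≤ 3 / 4 then pp x y else 0
noncomputable def m (x y z : ℝ) : ℝ :=
  if 0 < x ∧ 0 < y ∧ 0 < z ∧ x + y ≤ 5 / 4 ∧ x + z ≤ 5 / 4 ∧ y + z ≤ 5 / 4 ∧ x + y + z ≤ 3 / 2
    then 1 else 0
noncomputable def ep (x y z : ℝ) : ℝ :=
  if 0 < x ∧ 5 / 4 < y + z ∧ x + y ≤ 3 / 4 ∧ x + z ≤ 3 / 4 then 1 else 0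
noncomputable def en (x y z : ℝ) : ℝ :=
  if 5 / 4 < y + z ∧ y ≤ 3 / 4 ∧ z ≤ 3 / 4 ∧ 3 / 4 < x + y ∧ 3 / 4 < x + z ∧ x + y + z ≤ 3 / 2
    then 1 else 0
noncomputable def dl (x y z : ℝ) : ℝ :=
  if x ≤ 5 / 4 ∧ 5 / 4 < x + y ∧ 5 / 4 < x + z ∧ x + y + z ≤ 3 / 2 then 5 / 4 - x else 0
noncomputable def st (x y z : ℝ) : ℝ :=
  if 0 < z ∧ x + z ≤ 5 / 4 ∧ 5 / 4 < x + y ∧ y ≤ 1 / 4 then 1 / 4 - y else 0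
noncomputable def h1 (x y z : ℝ) : ℝ := ep x y z - en x y z
noncomputable def h2 (x y z : ℝ) : ℝ := (-11) * (dl x y z - st x y z - st x z y)
noncomputable def S (x y z : ℝ) : ℝ := g x y + g x z + g y z
noncomputable def F (x y z : ℝ) : ℝ :=
  m x y z * S x y z + h1 x y z + h1 y x z + h1 z x y + h2 x y z + h2 y x z + h2 z x y

lemma g_symm (x y : ℝ) : g x y = g y x := by
  have : pp x y = pp y x := by unfold pp; ring
  unfold g; rw [this]; congr 1; grind
lemma m_12 (x y z : ℝ) : m x y z = m y x z := by unfold m; congr 1; grind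
lemma m_23 (x y z : ℝ) : m x y z = m x z y := by unfold m; congr 1; grind
lemma ep_23 (x y z : ℝ) : ep x y z = ep x z y := by unfold ep; congr 1; grind
lemma en_23 (x y z : ℝ) : en x y z = en x z y := by unfold en; congr 1; grind
lemma dl_23 (x y z : ℝ) : dl x y z = dl x z y := by unfold dl; congr 1; grind
lemma h1_23 (x y z : ℝ) : h1 x y z = h1 x z y := by unfold h1; rw [ep_23, en_23]
lemma h2_23 (x y z : ℝ) : h2 x y z = h2 x z y := by unfold h2; rw [dl_23]; ring
lemma S_12 (x y z : ℝ) : S x y z = S y x z := by unfold S; rw [g_symm x y]; ring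
lemma S_23 (x y z : ℝ) : S x y z = S x z y := by unfold S; rw [g_symm y z]; ring
lemma F_12 (x y z : ℝ) : F x y z = F y x z := by
  unfold F; rw [m_12, S_12, h1_23 z, h2_23 z]; ring
lemma F_23 (x y z : ℝ) : F x y z = F x z y := by
  unfold F; rw [m_23, S_23, h1_23 x, h2_23 x, h1_23 y, h2_23 y, h1_23 z, h2_23 z]; ring

lemma N_m : N m := by
  apply N.ite (fun x y z => 0 < x ∧ 0 < y ∧ 0 < z ∧ x + y ≤ 5 / 4 ∧ x + z ≤ 5 / 4 ∧ y + z ≤ 5 / 4 ∧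
    x + y + z ≤ 3 / 2) (fun _ _ _ => 1)
  · simp only [Set.ofPred_and]
    repeat' apply MeasurableSet.inter
    all_goals first | exact measurableSet_lt (by fun_prop) (by fun_prop) | exact measurableSet_le (by fun_prop) (by fun_prop)
  · intro x y z h; simp only [abs_le]; grind
  · fun_prop
lemma N_ep : N ep := by
  apply N.ite (fun x y z => 0 < x ∧ 5 / 4 < y + z ∧ x + y ≤ 3 / 4 ∧ x + z ≤ 3 / 4) (fun _ _ _ => 1)
  · simp only [Set.ofPred_and]
    repeat' apply MeasurableSet.inter
    all_goals first | exact measurableSet_lt (by fun_prop) (by fun_prop) | exact measurableSet_le (by fun_prop) (by fun_prop)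
  · intro x y z h; simp only [abs_le]; grind
  · fun_prop
lemma N_en : N en := by
  apply N.ite (fun x y z => 5 / 4 < y + z ∧ y ≤ 3 / 4 ∧ z ≤ 3 / 4 ∧ 3 / 4 < x + y ∧ 3 / 4 < x + z ∧
    x + y + z ≤ 3 / 2) (fun _ _ _ => 1)
  · simp only [Set.ofPred_and]
    repeat' apply MeasurableSet.inter
    all_goals first | exact measurableSet_lt (by fun_prop) (by fun_prop) | exact measurableSet_le (by fun_prop) (by fun_prop)
  · intro x y z h; simp only [abs_le]; grind
  · fun_prop
lemma N_dl : N dl := by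
  apply N.ite (fun x y z => x ≤ 5 / 4 ∧ 5 / 4 < x + y ∧ 5 / 4 < x + z ∧ x + y + z ≤ 3 / 2)
    (fun x _ _ => 5 / 4 - x)
  · simp only [Set.ofPred_and]
    repeat' apply MeasurableSet.inter
    all_goals first | exact measurableSet_lt (by fun_prop) (by fun_prop) | exact measurableSet_le (by fun_prop) (by fun_prop)
  · intro x y z h; simp only [abs_le]; grind
  · fun_prop
lemma N_st : N st := by
  apply N.ite (fun x y z => 0 < z ∧ x + z ≤ 5 / 4 ∧ 5 / 4 < x + y ∧ y ≤ 1 / 4)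
    (fun _ y _ => 1 / 4 - y)
  · simp only [Set.ofPred_and]
    repeat' apply MeasurableSet.inter
    all_goals first | exact measurableSet_lt (by fun_prop) (by fun_prop) | exact measurableSet_le (by fun_prop) (by fun_prop)
  · intro x y z h; simp only [abs_le]; grind
  · fun_prop

lemma g_meas : Measurable fun p : ℝ × ℝ => g p.1 p.2 := by
  unfold g
  refine Measurable.ite ?_ (by unfold pp; fun_prop) measurable_const
  simp only [Set.ofPred_and]
  repeat' apply MeasurableSet.inter
  all_goals first | exact measurableSet_lt (by fun_prop) (by fun_prop) | exact measurableSet_le (by fun_prop) (by fun_prop)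

lemma g_bdd (x y : ℝ) : |g x y| ≤ 20 := by
  unfold g
  split_ifs with h
  · obtain ⟨h1, h2, h3⟩ := h
    unfold pp
    rw [abs_le]
    constructor <;> nlinarith [mul_pos h1 h2]
  · norm_num

lemma B_g12 : B (fun x y _ => g x y) :=
  ⟨g_meas.comp (by fun_prop : Measurable fun q : ℝ × ℝ × ℝ => (q.1, q.2.1)), 20, fun _ _ _ => g_bdd _ _⟩
lemma B_g13 : B (fun x _ z => g x z) := B_g12.p23
lemma B_g23 : B (fun _ y z => g y z) := by
  exact B_g13.p12
lemma B_S : B S := (B_g12.add B_g13).add B_g23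
lemma N_h1 : N h1 := N_ep.sub N_en
lemma N_h2 : N h2 := ((N_dl.sub N_st).sub N_st.p23).smul (-11)
lemma N_h1b : N (fun x y z => h1 y x z) := N_h1.p12
lemma N_h1c : N (fun x y z => h1 z x y) := N_h1.p12.p23
lemma N_h2b : N (fun x y z => h2 y x z) := N_h2.p12
lemma N_h2c : N (fun x y z => h2 z x y) := N_h2.p12.p23
lemma N_F : N F := ((((((N_m.mul B_S).add N_h1).add N_h1b).add N_h1c).add N_h2).add N_h2b).add N_h2c

/-- pointwise disjointness -/
lemma m_h1 (x y z : ℝ) : m x y z * h1 x y z = 0 := by unfold m h1 ep en; grind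
lemma m_h2 (x y z : ℝ) : m x y z * h2 x y z = 0 := by
  have a : m x y z * dl x y z = 0 := by unfold m dl; grind
  have b : m x y z * st x y z = 0 := by unfold m st; grind
  have c : m x y z * st x z y = 0 := by unfold m st; grind
  unfold h2; linear_combination (-11) * (a - b - c)
lemma h1_h1 (x y z : ℝ) : h1 x y z * h1 y x z = 0 := by unfold h1 ep en; grind
lemma h1_dl (x y z : ℝ) : h1 x y z * dl x y z = 0 := by unfold h1 ep en dl; grind
lemma h1_dl' (x y z : ℝ) : h1 x y z * dl y x z = 0 := by unfold h1 ep en dl; grind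
lemma h1_st (x y z : ℝ) : h1 x y z * st x y z = 0 := by unfold h1 ep en st; grind
lemma h1_st' (x y z : ℝ) : h1 x y z * st y x z = 0 := by unfold h1 ep en st; grind
lemma h1_st_c (x y z : ℝ) : h1 x y z * st y z x = 0 := by unfold h1 ep en st; grind
lemma h1_h2 (x y z : ℝ) : h1 x y z * h2 x y z = 0 := by
  have c := h1_st x z y
  rw [h1_23] at c
  unfold h2; linear_combination (-11) * (h1_dl x y z - h1_st x y z - c)
lemma h1_h2' (x y z : ℝ) : h1 x y z * h2 y x z = 0 := by
  unfold h2; linear_combination (-11) * (h1_dl' x y z - h1_st' x y z - h1_st_c x y z)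
lemma h2_h2 (x y z : ℝ) : h2 x y z * h2 y x z = 0 := by
  have a : x ≤ 1 → h2 x y z = 0 := by
    intro hx; unfold h2 dl st; grind
  have b : y ≤ 1 → h2 y x z = 0 := by
    intro hx; unfold h2 dl st; grind
  have c : 1 < x → 1 < y → h2 x y z = 0 := by
    intro hx; unfold h2 dl st; grind
  by_cases h : x ≤ 1
  · rw [a h, zero_mul]
  · by_cases h' : y ≤ 1
    · rw [b h', mul_zero]
    · rw [c (by linarith) (by linarith), zero_mul]
lemma m_m (x y z : ℝ) : m x y z * m x y z = m x y z := by unfold m; grind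

lemma h1_S (x y z : ℝ) : h1 x y z * S x y z = ep x y z * g x y + ep x y z * g x z := by
  unfold h1 S
  have a : en x y z * g x y = 0 := by unfold en g; grind
  have b : en x y z * g x z = 0 := by unfold en g; grind
  have c : en x y z * g y z = 0 := by unfold en g; grind
  have d : ep x y z * g y z = 0 := by unfold ep g; grind
  linear_combination d - a - b - c
lemma h1_sq (x y z : ℝ) : h1 x y z * h1 x y z = 2 * ep x y z - h1 x y z := by
  unfold h1 ep en; grind
lemma h2_S (x y z : ℝ) : h2 x y z * S x y z =
    (-11) * (dl x y z * g y z - st x y z * g y z - st x z y * g y z) := by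
  have a : dl x y z * g x y = 0 := by unfold dl g; grind
  have b : dl x y z * g x z = 0 := by unfold dl g; grind
  have c : st x y z * g x y = 0 := by unfold st g; grind
  have d : st x y z * g x z = 0 := by unfold st g; grind
  have e : st x z y * g x y = 0 := by unfold st g; grind
  have f : st x z y * g x z = 0 := by unfold st g; grind
  unfold h2 S; linear_combination (-11) * (a + b - c - d - e - f)
lemma h2_sq (x y z : ℝ) : h2 x y z * h2 x y z =
    121 * (dl x y z * dl x y z + st x y z * st x y z + st x z y * st x z y) := by
  have a : dl x y z * st x y z = 0 := by unfold dl st; grind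
  have b : dl x y z * st x z y = 0 := by unfold dl st; grind
  have c : st x y z * st x z y = 0 := by unfold st; grind
  unfold h2; linear_combination 242 * (c - a - b)

lemma key (x y z : ℝ) : 2 * (F x y z * S x y z) - F x y z * F x y z =
    m x y z * (S x y z * S x y z) +
    (2 * (h1 x y z * S x y z) - h1 x y z * h1 x y z) +
    (2 * (h1 y x z * S x y z) - h1 y x z * h1 y x z) +
    (2 * (h1 z x y * S x y z) - h1 z x y * h1 z x y) +
    (2 * (h2 x y z * S x y z) - h2 x y z * h2 x y z) +
    (2 * (h2 y x z * S x y z) - h2 y x z * h2 y x z) +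
    (2 * (h2 z x y * S x y z) - h2 z x y * h2 z x y) := by
  have q1 := m_h1 x y z
  have q2 : m x y z * h1 y x z = 0 := by rw [m_12]; exact m_h1 y x z
  have q3 : m x y z * h1 z x y = 0 := by rw [m_23, m_12]; exact m_h1 z x y
  have r1 := m_h2 x y z
  have r2 : m x y z * h2 y x z = 0 := by rw [m_12]; exact m_h2 y x z
  have r3 : m x y z * h2 z x y = 0 := by rw [m_23, m_12]; exact m_h2 z x y
  have s1 := h1_h1 x y z
  have s2 : h1 x y z * h1 z x y = 0 := by rw [h1_23]; exact h1_h1 x z y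
  have s3 : h1 y x z * h1 z x y = 0 := by rw [h1_23, h1_23 z]; exact h1_h1 y z x
  have t1 := h2_h2 x y z
  have t2 : h2 x y z * h2 z x y = 0 := by rw [h2_23]; exact h2_h2 x z y
  have t3 : h2 y x z * h2 z x y = 0 := by rw [h2_23, h2_23 z]; exact h2_h2 y z x
  have u1 := h1_h2 x y z
  have u2 := h1_h2 y x z
  have u3 := h1_h2 z x y
  have v1 := h1_h2' x y z
  have v2 : h1 x y z * h2 z x y = 0 := by rw [h1_23]; exact h1_h2' x z y
  have v3 := h1_h2' y x z
  have v4 : h1 y x z * h2 z x y = 0 := by rw [h1_23, h2_23]; exact h1_h2' y z x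
  have v5 : h1 z x y * h2 x y z = 0 := by rw [h2_23]; exact h1_h2' z x y
  have v6 : h1 z x y * h2 y x z = 0 := by rw [h1_23, h2_23]; exact h1_h2' z y x
  have mm := m_m x y z
  unfold F
  generalize S x y z = s at *
  generalize m x y z = m0 at *
  generalize h1 x y z = a1 at *
  generalize h1 y x z = a2 at *
  generalize h1 z x y = a3 at *
  generalize h2 x y z = b1 at *
  generalize h2 y x z = b2 at *
  generalize h2 z x y = b3 at *
  linear_combination (-(s * s)) * mm - 2 * s * (q1 + q2 + q3 + r1 + r2 + r3)
    - 2 * (s1 + s2 + s3 + t1 + t2 + t3 + u1 + u2 + u3 + v1 + v2 + v3 + v4 + v5 + v6)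

noncomputable def a1 (x y z : ℝ) : ℝ :=
  if (0 < x ∧ x ≤ 1/4) ∧ (1*x < y ∧ y ≤ 3/4 + (-1)*x) ∧ (0 < z ∧ z ≤ 5/4 + (-1)*y)
    then pp x y * pp x y else 0
noncomputable def a2 (x y z : ℝ) : ℝ :=
  if (1/4 < x ∧ x ≤ 3/8) ∧ (1*x < y ∧ y ≤ 3/4 + (-1)*x) ∧ (0 < z ∧ z ≤ 3/2 + (-1)*y + (-1)*x)
    then pp x y * pp x y else 0
noncomputable def k1 (x y z : ℝ) : ℝ :=
  if (0 < x ∧ x ≤ 3/4) ∧ (0 < y ∧ y ≤ 3/4 + (-1)*x) ∧ (0 < z ∧ z ≤ 3/4 + (-1)*x)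
    then pp x y * pp x z else 0
noncomputable def k2 (x y z : ℝ) : ℝ :=
  if (0 < x ∧ x ≤ 1/8) ∧ (1/2 + 1*x < y ∧ y ≤ 3/4 + (-1)*x) ∧ (5/4 + (-1)*y < z ∧ z ≤ 3/4 + (-1)*x)
    then pp x y * pp x z else 0

lemma N_a1 : N a1 := by
  apply N.ite (fun x y z => (0 < x ∧ x ≤ 1/4) ∧ (1*x < y ∧ y ≤ 3/4 + (-1)*x) ∧ 
    (0 < z ∧ z ≤ 5/4 + (-1)*y)) (fun x y _ => pp x y * pp x y)
  · simp only [Set.ofPred_and]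
    repeat' apply MeasurableSet.inter
    all_goals first | exact measurableSet_lt (by fun_prop) (by fun_prop) | exact measurableSet_le (by fun_prop) (by fun_prop)
  · intro x y z h; simp only [abs_le]; grind
  · unfold pp; fun_prop
lemma N_a2 : N a2 := by
  apply N.ite (fun x y z => (1/4 < x ∧ x ≤ 3/8) ∧ (1*x < y ∧ y ≤ 3/4 + (-1)*x) ∧
    (0 < z ∧ z ≤ 3/2 + (-1)*y + (-1)*x)) (fun x y _ => pp x y * pp x y)
  · simp only [Set.ofPred_and]
    repeat' apply MeasurableSet.inter
    all_goals first | exact measurableSet_lt (by fun_prop) (by fun_prop) | exact measurableSet_le (by fun_prop) (by fun_prop)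
  · intro x y z h; simp only [abs_le]; grind
  · unfold pp; fun_prop
lemma N_k1 : N k1 := by
  apply N.ite (fun x y z => (0 < x ∧ x ≤ 3/4) ∧ (0 < y ∧ y ≤ 3/4 + (-1)*x) ∧
    (0 < z ∧ z ≤ 3/4 + (-1)*x)) (fun x y z => pp x y * pp x z)
  · simp only [Set.ofPred_and]
    repeat' apply MeasurableSet.inter
    all_goals first | exact measurableSet_lt (by fun_prop) (by fun_prop) | exact measurableSet_le (by fun_prop) (by fun_prop)
  · intro x y z h; simp only [abs_le]; grind
  · unfold pp; fun_prop
lemma N_k2 : N k2 := by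
  apply N.ite (fun x y z => (0 < x ∧ x ≤ 1/8) ∧ (1/2 + 1*x < y ∧ y ≤ 3/4 + (-1)*x) ∧ 
    (5/4 + (-1)*y < z ∧ z ≤ 3/4 + (-1)*x)) (fun x y z => pp x y * pp x z)
  · simp only [Set.ofPred_and]
    repeat' apply MeasurableSet.inter
    all_goals first | exact measurableSet_lt (by fun_prop) (by fun_prop) | exact measurableSet_le (by fun_prop) (by fun_prop)
  · intro x y z h; simp only [abs_le]; grind
  · unfold pp; fun_prop

lemma E_a1 : E a1 = 1138651/2949120 :=
  (int3 a1 N_a1.int 0 (1/4) (fun x => 1*x) (fun x => 3/4 + (-1)*x) (fun _ _ => 0)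
    (fun _ y => 5/4 + (-1)*y) (fun x y _ => pp x y * pp x y) (by norm_num)
    (by intros; linarith) (by intros; linarith) (fun _ _ _ => rfl)).trans ev_A1
lemma E_a2 : E a2 = 40921/2949120 :=
  (int3 a2 N_a2.int (1/4) (3/8) (fun x => 1*x) (fun x => 3/4 + (-1)*x) (fun _ _ => 0)
    (fun x y => 3/2 + (-1)*y + (-1)*x) (fun x y _ => pp x y * pp x y) (by norm_num)
    (by intros; linarith) (by intros; linarith) (fun _ _ _ => rfl)).trans ev_A2
lemma E_k1 : E k1 = 946989/2293760 :=
  (int3 k1 N_k1.int 0 (3/4) (fun _ => 0) (fun x => 3/4 + (-1)*x) (fun _ _ => 0)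
    (fun x _ => 3/4 + (-1)*x) (fun x y z => pp x y * pp x z) (by norm_num)
    (by intros; linarith) (by intros; linarith) (fun _ _ _ => rfl)).trans ev_C1
lemma E_k2 : E k2 = 12233/8257536 :=
  (int3 k2 N_k2.int 0 (1/8) (fun x => 1/2 + 1*x) (fun x => 3/4 + (-1)*x) (fun _ y => 5/4 + (-1)*y)
    (fun x _ => 3/4 + (-1)*x) (fun x y z => pp x y * pp x z) (by norm_num)
    (by intros; linarith) (by intros; linarith) (fun _ _ _ => rfl)).trans ev_C2
lemma E_ep : E ep = 1/768 :=
  (int3 ep N_ep.int 0 (1/8) (fun x => 1/2 + 1*x) (fun x => 3/4 + (-1)*x) (fun _ y => 5/4 + (-1)*y)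
    (fun x _ => 3/4 + (-1)*x) (fun _ _ _ => 1) (by norm_num)
    (by intros; linarith) (by intros; linarith)
    (by intro x y z; unfold ep; congr 1; grind)).trans ev_E1v
lemma E_epg : E (fun x y z => ep x y z * g x y) = 683/491520 :=
  (int3 _ (N_ep.mul B_g12).int 0 (1/8) (fun x => 1/2 + 1*x) (fun x => 3/4 + (-1)*x)
    (fun _ y => 5/4 + (-1)*y)
    (fun x _ => 3/4 + (-1)*x) (fun x y _ => pp x y) (by norm_num)
    (by intros; linarith) (by intros; linarith)
    (by intro x y z; unfold ep g; grind)).trans ev_E1g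
lemma E_dd : E (fun x y z => dl x y z * dl x y z) = 1/61440 :=
  (int3 _ (N_dl.mul N_dl.toB).int 1 (5/4) (fun x => 5/4 + (-1)*x) (fun _ => 1/4)
    (fun x _ => 5/4 + (-1)*x)
    (fun x y => 3/2 + (-1)*y + (-1)*x) (fun x _ _ => (5/4 - x) * (5/4 - x)) (by norm_num)
    (by intros; linarith) (by intros; linarith)
    (by intro x y z; unfold dl; grind)).trans ev_DD
lemma E_ss : E (fun x y z => st x y z * st x y z) = 1/61440 :=
  (int3 _ (N_st.mul N_st.toB).int 1 (5/4) (fun x => 5/4 + (-1)*x) (fun _ => 1/4)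
    (fun _ _ => 0)
    (fun x _ => 5/4 + (-1)*x) (fun _ y _ => (1/4 - y) * (1/4 - y)) (by norm_num)
    (by intros; linarith) (by intros; linarith)
    (by intro x y z; unfold st; grind)).trans ev_SS
lemma E_dg : E (fun x y z => dl x y z * g y z) = 217/589824 :=
  (int3 _ (N_dl.mul B_g23).int 1 (5/4) (fun x => 5/4 + (-1)*x) (fun _ => 1/4)
    (fun x _ => 5/4 + (-1)*x)
    (fun x y => 3/2 + (-1)*y + (-1)*x) (fun x y z => (5/4 - x) * pp y z) (by norm_num)
    (by intros; linarith) (by intros; linarith)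
    (by intro x y z; unfold dl g; grind)).trans ev_Dg
lemma E_sg : E (fun x y z => st x y z * g y z) = 37/81920 :=
  (int3 _ (N_st.mul B_g23).int 1 (5/4) (fun x => 5/4 + (-1)*x) (fun _ => 1/4)
    (fun _ _ => 0)
    (fun x _ => 5/4 + (-1)*x) (fun _ y z => (1/4 - y) * pp y z) (by norm_num)
    (by intros; linarith) (by intros; linarith)
    (by intro x y z; unfold st g; grind)).trans ev_Sg

lemma G_int : Integrable (fun p : ℝ × ℝ => g p.1 p.2 * g p.1 p.2) := by
  have hK : IsCompact (Set.Icc (-2 : ℝ) 2 ×ˢ Set.Icc (-2 : ℝ) 2) :=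
    isCompact_Icc.prod isCompact_Icc
  rw [← integrableOn_iff_integrable_of_support_subset
    (s := Set.Icc (-2 : ℝ) 2 ×ˢ Set.Icc (-2 : ℝ) 2)]
  · refine Measure.integrableOn_of_bounded (M := 20 * 20) hK.measure_lt_top.ne
      (g_meas.mul g_meas).aestronglyMeasurable (Filter.Eventually.of_forall fun q => ?_)
    rw [norm_mul]
    exact mul_le_mul (g_bdd _ _) (g_bdd _ _) (norm_nonneg _) (by norm_num)
  · intro q hq
    have h := left_ne_zero_of_mul hq
    unfold g at h
    constructor <;> constructor <;> grind

lemma G_val : ∫ p : ℝ × ℝ, g p.1 p.2 * g p.1 p.2 = 13365/16384 :=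
  (int2 (fun x y => g x y * g x y) G_int 0 (3/4) (fun _ => 0) (fun x => 3/4 + (-1)*x) 
    (fun x y => pp x y * pp x y)
    (by norm_num) (by intros; linarith)
    (by intro x y; unfold g; grind)).trans ev_G

lemma E_mgg : E (fun x y z => m x y z * (g x y * g x z)) = E k1 - E k2 := by
  rw [← E_sub N_k1 N_k2]; congr 1; funext x y z
  unfold m g k1 k2
  grind

lemma mg2_lt (x y z : ℝ) (h : x < y) :
    a1 x y z + a2 x y z = m x y z * (g x y * g x y) := by
  by_cases h0 : 0 < x ∧ x + y ≤ 3 / 4 ∧ 0 < z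
  · obtain ⟨hx, hxy, hz⟩ := h0
    have hg : g x y = pp x y := if_pos ⟨hx, by linarith, hxy⟩
    rw [hg]
    by_cases hm : y + z ≤ 5 / 4 ∧ x + y + z ≤ 3 / 2
    · have h3 : m x y z = 1 :=
        if_pos ⟨hx, by linarith, hz, by linarith, by linarith, hm.1, hm.2⟩
      rw [h3]
      by_cases hq : x ≤ 1 / 4
      · have e1 : a1 x y z = pp x y * pp x y :=
          if_pos ⟨⟨hx, hq⟩, ⟨by linarith, by linarith⟩, hz, by linarith [hm.1]⟩
        have e2 : a2 x y z = 0 := if_neg fun h => by linarith [h.1.1]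
        rw [e1, e2]; ring
      · have e1 : a1 x y z = 0 := if_neg fun h => hq h.1.2
        have e2 : a2 x y z = pp x y * pp x y :=
          if_pos ⟨⟨by linarith, by linarith⟩, ⟨by linarith, by linarith⟩, hz, by linarith [hm.2]⟩
        rw [e1, e2]; ring
    · have h3 : m x y z = 0 := if_neg fun h => hm ⟨h.2.2.2.2.2.1, h.2.2.2.2.2.2⟩
      have e1 : a1 x y z = 0 := if_neg fun h => hm ⟨by linarith [h.2.2.2], by linarith [h.2.2.2, h.1.2]⟩
      have e2 : a2 x y z = 0 := if_neg fun h => hm ⟨by linarith [h.2.2.2, h.1.1], by linarith [h.2.2.2]⟩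
      rw [h3, e1, e2]; ring
  · have e1 : a1 x y z = 0 := if_neg fun h => h0 ⟨h.1.1, by linarith [h.2.1.2], h.2.2.1⟩
    have e2 : a2 x y z = 0 := if_neg fun h =>
      h0 ⟨by linarith [h.1.1], by linarith [h.2.1.2], h.2.2.1⟩
    have e3 : m x y z * (g x y * g x y) = 0 := by
      by_cases hg : g x y = 0
      · rw [hg]; ring
      · have e4 : m x y z = 0 := if_neg fun hm => hg (if_neg fun hh => h0 ⟨hh.1, hh.2.2, hm.2.2.1⟩)
        rw [e4]; ring
    rw [e1, e2, e3]; ring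

lemma E_mg2 : 2 * (E a1 + E a2) ≤ E (fun x y z => m x y z * (g x y * g x y)) := by
  have h1 : 2 * (E a1 + E a2) = E (fun x y z => (a1 x y z + a2 x y z) + (a1 y x z + a2 y x z)) := by
    rw [E_add (N_a1.add N_a2) (N_a1.p12.add N_a2.p12), E_add N_a1 N_a2, E_add N_a1.p12 N_a2.p12,
      E_p12 a1, E_p12 a2]; ring
  rw [h1]
  apply E_mono ((N_a1.add N_a2).add (N_a1.p12.add N_a2.p12)) (N_m.mul (B_g12.mul B_g12))
  intro x y z
  have hn : 0 ≤ m x y z * (g x y * g x y) :=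
    mul_nonneg (by unfold m; split_ifs <;> norm_num) (mul_self_nonneg _)
  have e0 : ∀ x y z : ℝ, ¬ x < y → a1 x y z + a2 x y z = 0 := by
    intro x y z h
    have e1 : a1 x y z = 0 := if_neg fun hh => h (by linarith [hh.2.1.1])
    have e2 : a2 x y z = 0 := if_neg fun hh => h (by linarith [hh.2.1.1])
    rw [e1, e2, add_zero]
  rcases lt_trichotomy x y with h | h | h
  · have := mg2_lt x y z h; have := e0 y x z (by linarith); linarith
  · have := e0 x y z (by linarith); have := e0 y x z (by linarith); linarith
  · have h3 := mg2_lt y x z h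
    rw [g_symm y x, m_12 y x] at h3
    have := e0 x y z (by linarith); linarith

lemma ind_int (a b c : ℝ) : ∫ x : ℝ, (if a < x ∧ x ≤ b then c else 0) = max (b - a) 0 * c := by
  have : (fun x : ℝ => if a < x ∧ x ≤ b then c else 0) = (Set.Ioc a b).indicator (fun _ => c) := by
    ext x; simp [Set.indicator, Set.mem_Ioc]
  rw [this, integral_indicator measurableSet_Ioc, setIntegral_const]
  simp [Measure.real, Real.volume_Ioc, ENNReal.toReal_ofReal', max_comm]

lemma ind_intble (a b c : ℝ) : Integrable (fun x : ℝ => if a < x ∧ x ≤ b then c else 0) := by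
  have : (fun x : ℝ => if a < x ∧ x ≤ b then c else 0) = (Set.Ioc a b).indicator (fun _ => c) := by
    ext x; simp [Set.indicator, Set.mem_Ioc]
  rw [this, integrable_indicator_iff measurableSet_Ioc]
  simp

lemma marg_h1 (y z : ℝ) : ∫ x, h1 x y z = 0 := by
  by_cases h : 5 / 4 < y + z ∧ y ≤ 3 / 4 ∧ z ≤ 3 / 4
  · obtain ⟨h0, hy, hz⟩ := h
    have e : (fun x => h1 x y z) = fun x =>
        (if 0 < x ∧ x ≤ min (3/4 - y) (3/4 - z) then (1:ℝ) else 0) -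
        (if max (3/4 - y) (3/4 - z) < x ∧ x ≤ 3/2 - y - z then (1:ℝ) else 0) := by
      funext x; unfold h1 ep en; simp only [le_min_iff, max_lt_iff]; congr 2 <;> grind
    rw [e, integral_sub (ind_intble _ _ _) (ind_intble _ _ _), ind_int, ind_int]
    rcases le_total y z with h | h
    · rw [min_eq_right (by linarith), max_eq_left (a := 3/4 - y) (by linarith)]; ring_nf
    · rw [min_eq_left (by linarith), max_eq_right (a := 3/4 - y) (by linarith)]; ring_nf
  · have e : (fun x => h1 x y z) = fun _ => 0 := by funext x; unfold h1 ep en; grind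
    rw [e, integral_zero]

lemma marg_h2 (x y : ℝ) (hxy : 5 / 4 < x + y) : ∫ z, h2 x y z = 0 := by
  by_cases h : x ≤ 5 / 4 ∧ y ≤ 1 / 4
  · obtain ⟨hx, hy⟩ := h
    have e : (fun z => h2 x y z) = fun z => (-11) * (
        (if 5/4 - x < z ∧ z ≤ 3/2 - x - y then (5/4 - x) else 0) -
        (if 0 < z ∧ z ≤ 5/4 - x then (1/4 - y) else 0)) := by
      funext z; unfold h2 dl st; grind
    rw [e, integral_const_mul, integral_sub (ind_intble _ _ _) (ind_intble _ _ _), ind_int, ind_int,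
      max_eq_left (by linarith), max_eq_left (by linarith)]
    ring
  · have e : (fun z => h2 x y z) = fun _ => 0 := by funext z; unfold h2 dl st; grind
    rw [e, integral_zero]

lemma E_h1 : E h1 = 0 := by
  have e : E h1 = E (fun x y z => h1 z x y) := by
    rw [← E_p12 h1, ← E_p23]
  have hN := N_h1c.int
  rw [e, E_assoc, Measure.volume_eq_prod, integral_prod]
  · simp [marg_h1]
  · exact ((volume_preserving_prodAssoc (α₁ := ℝ) (β₁ := ℝ) (γ₁ := ℝ)).integrable_comp_emb
      (MeasurableEquiv.measurableEmbedding _)).2 hN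


lemma E_c (f : ℝ → ℝ → ℝ → ℝ) : E (fun x y z => f z x y) = E f := by
  rw [← E_p12 f, ← E_p23]
lemma E_d (f : ℝ → ℝ → ℝ → ℝ) : E (fun x y z => f y z x) = E f := by
  rw [← E_p23 f, ← E_p12]

noncomputable def qA (x y z : ℝ) : ℝ := m x y z * (g x y * g x y)
noncomputable def qC (x y z : ℝ) : ℝ := m x y z * (g x y * g x z)
noncomputable def q1 (x y z : ℝ) : ℝ := 2 * (h1 x y z * S x y z) - h1 x y z * h1 x y z
noncomputable def q2 (x y z : ℝ) : ℝ := 2 * (h2 x y z * S x y z) - h2 x y z * h2 x y z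

lemma N_qA : N qA := N_m.mul (B_g12.mul B_g12)
lemma N_qC : N qC := N_m.mul (B_g12.mul B_g13)
lemma N_q1 : N q1 := ((N_h1.mul B_S).smul 2).sub (N_h1.mul N_h1.toB)
lemma N_q2 : N q2 := ((N_h2.mul B_S).smul 2).sub (N_h2.mul N_h2.toB)

lemma E_q1 : E q1 = 4 * (683/491520) - 2 * (1/768) := by
  have n1 : N (fun x y z => ep x y z * g x y) := N_ep.mul B_g12
  have n2 : N (fun x y z => ep x z y * g x z) := n1.p23
  have e : q1 = fun x y z => ((2 * (ep x y z * g x y) + 2 * (ep x z y * g x z)) - 2 * ep x y z)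
      + h1 x y z := by
    funext x y z
    unfold q1
    rw [h1_S, h1_sq, ep_23 x z y]; ring
  have e2 : E (fun x y z => ep x z y * g x z) = 683/491520 :=
    (E_p23 (fun x y z => ep x y z * g x y)).trans E_epg
  rw [e, E_add (((n1.smul 2).add (n2.smul 2)).sub (N_ep.smul 2)) N_h1,
    E_sub ((n1.smul 2).add (n2.smul 2)) (N_ep.smul 2), E_add (n1.smul 2) (n2.smul 2),
    E_smul (f := fun x y z => ep x y z * g x y) 2, E_smul (f := fun x y z => ep x z y * g x z) 2,
    E_smul (f := ep) 2, E_h1, E_ep, E_epg, e2]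
  norm_num

lemma E_q2 : E q2 = -22 * (217/589824 - 2 * (37/81920)) - 121 * (1/61440 + 2 * (1/61440)) := by
  have n1 : N (fun x y z => dl x y z * g y z) := N_dl.mul B_g23
  have n2 : N (fun x y z => st x y z * g y z) := N_st.mul B_g23
  have n3 : N (fun x y z => st x z y * g z y) := n2.p23
  have n4 : N (fun x y z => dl x y z * dl x y z) := N_dl.mul N_dl.toB
  have n5 : N (fun x y z => st x y z * st x y z) := N_st.mul N_st.toB
  have n6 : N (fun x y z => st x z y * st x z y) := n5.p23
  have e : q2 = fun x y z => (-22) * ((dl x y z * g y z - st x y z * g y z) - st x z y * g z y)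
      - 121 * ((dl x y z * dl x y z + st x y z * st x y z) + st x z y * st x z y) := by
    funext x y z
    unfold q2
    rw [h2_S, h2_sq, g_symm z y]; ring
  have e3 : E (fun x y z => st x z y * g z y) = 37/81920 :=
    (E_p23 (fun x y z => st x y z * g y z)).trans E_sg
  have e6 : E (fun x y z => st x z y * st x z y) = 1/61440 :=
    (E_p23 (fun x y z => st x y z * st x y z)).trans E_ss
  rw [e, E_sub (((n1.sub n2).sub n3).smul (-22)) (((n4.add n5).add n6).smul 121),
    E_smul (f := fun x y z => (dl x y z * g y z - st x y z * g y z) - st x z y * g z y) (-22),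
    E_smul (f := fun x y z => (dl x y z * dl x y z + st x y z * st x y z) + st x z y * st x z y) 121,
    E_sub (n1.sub n2) n3, E_sub n1 n2, E_add (n4.add n5) n6, E_add n4 n5,
    E_dg, E_sg, e3, E_dd, E_ss, e6]
  norm_num

lemma E_mSS : E (fun x y z => m x y z * (S x y z * S x y z)) = 3 * E qA + 6 * E qC := by
  have e : (fun x y z => m x y z * (S x y z * S x y z)) = fun x y z =>
      ((qA x y z + qA x z y) + qA y z x) + 2 * ((qC x y z + qC y x z) + qC z x y) := by
    funext x y z
    unfold qA qC
    rw [← m_23 x y z, ← m_12 x y z, ← m_23 y x z, ← m_12 x y z, ← m_12 x z y, ← m_23 x y z,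
      g_symm y x, g_symm z x, g_symm z y]
    unfold S; ring
  have na : N (fun x y z => qA x z y) := N_qA.p23
  have nb : N (fun x y z => qA y z x) := na.p12
  have nc : N (fun x y z => qC y x z) := N_qC.p12
  have nd : N (fun x y z => qC z x y) := nc.p23
  rw [e, E_add ((N_qA.add na).add nb) (((N_qC.add nc).add nd).smul 2),
    E_smul (f := fun x y z => (qC x y z + qC y x z) + qC z x y) 2,
    E_add (N_qA.add na) nb, E_add N_qA na, E_add (N_qC.add nc) nd, E_add N_qC nc,
    E_p23 qA, E_d qA, E_p12 qC, E_c qC]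
  ring

lemma N_FS : N (fun x y z => F x y z * S x y z) := N_F.mul B_S
lemma N_FF : N (fun x y z => F x y z * F x y z) := N_F.mul N_F.toB

lemma main_lower : 6 * (13365/16384) <
    2 * E (fun x y z => F x y z * S x y z) - E (fun x y z => F x y z * F x y z) := by
  have n0 : N (fun x y z => m x y z * (S x y z * S x y z)) := N_m.mul (B_S.mul B_S)
  have n1 : N (fun x y z => q1 y x z) := N_q1.p12
  have n2 : N (fun x y z => q1 z x y) := n1.p23
  have n3 : N (fun x y z => q2 y x z) := N_q2.p12
  have n4 : N (fun x y z => q2 z x y) := n3.p23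
  have e : (fun x y z => 2 * (F x y z * S x y z) - F x y z * F x y z) = fun x y z =>
      (((((m x y z * (S x y z * S x y z) + q1 x y z) + q1 y x z) + q1 z x y) + q2 x y z)
        + q2 y x z) + q2 z x y := by
    funext x y z
    rw [key]
    unfold q1 q2
    rw [← S_12 x y z, ← S_12 x z y, ← S_23 x y z]
  have e2 : E (fun x y z => 2 * (F x y z * S x y z) - F x y z * F x y z) =
      2 * E (fun x y z => F x y z * S x y z) - E (fun x y z => F x y z * F x y z) := by
    rw [E_sub (N_FS.smul 2) N_FF, E_smul (f := fun x y z => F x y z * S x y z) 2]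
  have hA : 2 * (E a1 + E a2) ≤ E qA := E_mg2
  have hC : E qC = E k1 - E k2 := E_mgg
  rw [← e2, e, E_add (((((n0.add N_q1).add n1).add n2).add N_q2).add n3) n4,
    E_add ((((n0.add N_q1).add n1).add n2).add N_q2) n3,
    E_add (((n0.add N_q1).add n1).add n2) N_q2,
    E_add ((n0.add N_q1).add n1) n2, E_add (n0.add N_q1) n1, E_add n0 N_q1,
    E_p12 q1, E_c q1, E_p12 q2, E_c q2, E_mSS, E_q1, E_q2, hC, E_k1, E_k2]
  rw [E_a1, E_a2] at hA
  linarith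

lemma E_FS : E (fun x y z => F x y z * S x y z) = 3 * E (fun x y z => F x y z * g x y) := by
  have n1 : N (fun x y z => F x y z * g x y) := N_F.mul B_g12
  have n2 : N (fun x y z => F x z y * g x z) := n1.p23
  have n3 : N (fun x y z => F y z x * g y z) := n2.p12
  have e : (fun x y z => F x y z * S x y z) = fun x y z =>
      (F x y z * g x y + F x z y * g x z) + F y z x * g y z := by
    funext x y z
    rw [F_23 y z x, ← F_12 x y z, ← F_23 x y z]; unfold S; ring
  rw [e, E_add (n1.add n2) n3, E_add n1 n2, E_p23 (fun x y z => F x y z * g x y),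
    E_d (fun x y z => F x y z * g x y)]
  ring

lemma F_ne : ¬ ((fun q : ℝ × ℝ × ℝ => F q.1 q.2.1 q.2.2) =ᵐ[volume] 0) := by
  intro h
  have h1 : E (fun x y z => F x y z * S x y z) = 0 := by
    unfold E
    rw [← integral_zero (ℝ × ℝ × ℝ) ℝ]
    apply integral_congr_ae
    filter_upwards [h] with q hq
    simp only [Pi.zero_apply] at hq
    rw [hq, zero_mul]
  have h2 : E (fun x y z => F x y z * F x y z) = 0 := by
    unfold E
    rw [← integral_zero (ℝ × ℝ × ℝ) ℝ]
    apply integral_congr_ae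
    filter_upwards [h] with q hq
    simp only [Pi.zero_apply] at hq
    rw [hq, zero_mul]
  have := main_lower
  rw [h1, h2] at this
  norm_num at this


/-- the support region -/
def R (x y z : ℝ) : Prop := 0 < x ∧ 0 < y ∧ 0 < z ∧ x + y + z ≤ 3 / 2

lemma m_R (x y z : ℝ) (h : ¬ R x y z) : m x y z = 0 :=
  if_neg fun hh => h ⟨hh.1, hh.2.1, hh.2.2.1, hh.2.2.2.2.2.2⟩
lemma h1_R (x y z : ℝ) (h : ¬ R x y z) : h1 x y z = 0 := by
  have a : ep x y z = 0 := if_neg fun ⟨a, b, c, d⟩ =>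
    h ⟨by linarith, by linarith, by linarith, by linarith⟩
  have b : en x y z = 0 := if_neg fun ⟨a, b, c, d, e, f⟩ =>
    h ⟨by linarith, by linarith, by linarith, by linarith⟩
  unfold h1; rw [a, b, sub_zero]
lemma st_R (x y z : ℝ) (h : ¬ R x y z) : st x y z = 0 := if_neg fun ⟨a, b, c, d⟩ =>
    h ⟨by linarith, by linarith, by linarith, by linarith⟩
lemma R_23 (x y z : ℝ) : R x z y ↔ R x y z := by unfold R; constructor <;> (intro h; grind)
lemma R_12 (x y z : ℝ) : R y x z ↔ R x y z := by unfold R; constructor <;> (intro h; grind)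
lemma h2_R (x y z : ℝ) (h : ¬ R x y z) : h2 x y z = 0 := by
  have a : dl x y z = 0 := if_neg fun ⟨a, b, c, d⟩ =>
    h ⟨by linarith, by linarith, by linarith, by linarith⟩
  have h' : ¬ R x z y := by rwa [R_23]
  unfold h2; rw [a, st_R x y z h, st_R x z y h']; ring
lemma F_R (x y z : ℝ) (h : ¬ R x y z) : F x y z = 0 := by
  have h2' : ¬ R y x z := by rwa [R_12]
  have h3' : ¬ R z x y := by rwa [R_12, R_23]
  unfold F
  rw [m_R x y z h, h1_R x y z h, h1_R y x z h2', h1_R z x y h3', h2_R x y z h, h2_R y x z h2',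
    h2_R z x y h3']
  ring

lemma slice {f : ℝ → ℝ → ℝ → ℝ} (hf : N f) (x y : ℝ) : Integrable (fun z => f x y z) := by
  obtain ⟨C, hC⟩ := hf.bdd
  rw [← integrableOn_iff_integrable_of_support_subset (s := Set.Icc (-2 : ℝ) 2)]
  · exact Measure.integrableOn_of_bounded (M := C) isCompact_Icc.measure_lt_top.ne
      (hf.meas.comp (by fun_prop : Measurable fun z : ℝ => (x, y, z))).aestronglyMeasurable
      (Filter.Eventually.of_forall fun q => hC _ _ _)
  · intro z hz
    have h3 := (hf.supp _ _ _ hz).2.2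
    rw [abs_le] at h3
    exact h3

lemma half (x y : ℝ) : (∫ s in Set.Ioi (0 : ℝ), F x y s) = ∫ s, F x y s := by
  apply setIntegral_eq_integral_of_forall_compl_eq_zero
  intro s hs
  exact F_R _ _ _ fun h => hs h.2.2.1

lemma h1_big (x y s : ℝ) (h : 5 / 4 < x + y) : h1 x y s = 0 := by
  have a : ep x y s = 0 := if_neg fun ⟨a, b, c, d⟩ => by linarith
  have b : en x y s = 0 := if_neg fun ⟨a, b, c, d, e, f⟩ => by linarith
  unfold h1; rw [a, b, sub_zero]
lemma h2_big (x y s : ℝ) (h : 5 / 4 < x + y) : h2 s x y = 0 := by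
  have a : dl s x y = 0 := if_neg fun ⟨a, b, c, d⟩ => by linarith
  have b : st s x y = 0 := if_neg fun ⟨a, b, c, d⟩ => by linarith
  have c : st s y x = 0 := if_neg fun ⟨a, b, c, d⟩ => by linarith
  unfold h2; rw [a, b, c]; ring

lemma marg_F (x y : ℝ) (h : 5 / 4 < x + y) : ∫ s, F x y s = 0 := by
  have e : (fun s => F x y s) = fun s => (h1 s x y + h2 x y s) + h2 y x s := by
    funext s
    have hm : m x y s = 0 := if_neg fun hh => by linarith [hh.2.2.2.1]
    unfold F
    rw [hm, h1_big x y s h, h1_big y x s (by linarith), h2_big x y s h]; ring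
  have i1 := slice N_h1c x y
  have i2 := slice N_h2 x y
  have i3 := slice N_h2b x y
  have i4 : Integrable (fun s => h1 s x y + h2 x y s) := i1.add i2
  rw [e, integral_add i4 i3, integral_add i1 i2, marg_h1, marg_h2 x y h,
    marg_h2 y x (by linarith)]
  ring

noncomputable def J (p : ℝ × ℝ) : ℝ := ∫ s, F p.1 p.2 s

lemma J_meas : Measurable J := by
  have : StronglyMeasurable fun r : (ℝ × ℝ) × ℝ => F r.1.1 r.1.2 r.2 :=
    (N_F.meas.comp (by fun_prop : Measurable fun r : (ℝ × ℝ) × ℝ =>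
      (r.1.1, r.1.2, r.2))).stronglyMeasurable
  exact (this.integral_prod_right' (ν := volume)).measurable

lemma J_bdd : ∃ C, ∀ p, |J p| ≤ C := by
  obtain ⟨C, hC⟩ := N_F.bdd
  refine ⟨C * volume.real (Set.Icc (-2 : ℝ) 2), fun p => ?_⟩
  have : J p = ∫ s in Set.Icc (-2 : ℝ) 2, F p.1 p.2 s := by
    symm
    apply setIntegral_eq_integral_of_forall_compl_eq_zero
    intro s hs
    by_contra h
    exact hs (abs_le.1 (N_F.supp _ _ _ h).2.2)
  rw [this]
  exact norm_setIntegral_le_of_norm_le_const (f := fun s => F p.1 p.2 s) (C := C)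
    isCompact_Icc.measure_lt_top (fun s _ => hC _ _ _)

/-- the triangle -/
def T : Set (ℝ × ℝ) := {p : ℝ × ℝ | 0 ≤ p.1 ∧ 0 ≤ p.2 ∧ p.1 + p.2 ≤ 1 - 1 / 4}

lemma T_meas : MeasurableSet T := by
  unfold T
  simp only [Set.ofPred_and]
  repeat' apply MeasurableSet.inter
  all_goals exact measurableSet_le (by fun_prop) (by fun_prop)

lemma T_fin : volume T ≠ ⊤ := by
  have hK : IsCompact (Set.Icc (0 : ℝ) 1 ×ˢ Set.Icc (0 : ℝ) 1) :=
    isCompact_Icc.prod isCompact_Icc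
  refine ((measure_mono ?_).trans_lt hK.measure_lt_top).ne
  rintro p ⟨h1, h2, h3⟩
  exact ⟨⟨h1, by linarith⟩, ⟨h2, by linarith⟩⟩

lemma T_int (f : ℝ × ℝ → ℝ) (hf : Measurable f) (hb : ∃ C, ∀ p, |f p| ≤ C) : IntegrableOn f T := by
  obtain ⟨C, hC⟩ := hb
  exact Measure.integrableOn_of_bounded (M := C) T_fin hf.aestronglyMeasurable
    (Filter.Eventually.of_forall fun q => hC _)

lemma T_g (f : ℝ × ℝ → ℝ) : ∫ p in T, f p * g p.1 p.2 = ∫ p, f p * g p.1 p.2 := by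
  apply setIntegral_eq_integral_of_forall_compl_eq_zero
  intro p hp
  have : g p.1 p.2 = 0 := if_neg fun h => hp ⟨h.1.le, h.2.1.le, by linarith [h.2.2]⟩
  rw [this, mul_zero]

lemma Jg : ∫ p, J p * g p.1 p.2 = E (fun x y z => F x y z * g x y) := by
  have hN : N (fun x y z => F x y z * g x y) := N_F.mul B_g12
  rw [E_assoc, Measure.volume_eq_prod (ℝ × ℝ) ℝ, integral_prod]
  · congr 1; funext p
    exact (integral_mul_const _ _).symm
  · exact ((volume_preserving_prodAssoc (α₁ := ℝ) (β₁ := ℝ) (γ₁ := ℝ)).integrable_comp_emb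
      (MeasurableEquiv.measurableEmbedding _)).2 hN.int

lemma mul_bdd {f k : ℝ × ℝ → ℝ} (hf : ∃ C, ∀ p, |f p| ≤ C) (hk : ∃ C, ∀ p, |k p| ≤ C) :
    ∃ C, ∀ p, |f p * k p| ≤ C := by
  obtain ⟨C, hC⟩ := hf
  obtain ⟨D, hD⟩ := hk
  refine ⟨C * D, fun p => ?_⟩
  rw [abs_mul]
  exact mul_le_mul (hC p) (hD p) (abs_nonneg _) ((abs_nonneg _).trans (hC p))

lemma J_lower : 4 * E (fun x y z => F x y z * g x y) - 4 * (13365/16384) ≤ ∫ p in T, J p ^ 2 := by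
  have gb : ∃ C, ∀ p : ℝ × ℝ, |g p.1 p.2| ≤ C := ⟨20, fun p => g_bdd _ _⟩
  have i1 : IntegrableOn (fun p => J p * g p.1 p.2) T :=
    T_int _ (J_meas.mul g_meas) (mul_bdd J_bdd gb)
  have i2 : IntegrableOn (fun p : ℝ × ℝ => g p.1 p.2 * g p.1 p.2) T :=
    T_int _ (g_meas.mul g_meas) (mul_bdd gb gb)
  have i3 : IntegrableOn (fun p => J p * J p) T :=
    T_int _ (J_meas.mul J_meas) (mul_bdd J_bdd J_bdd)
  have e : 4 * E (fun x y z => F x y z * g x y) - 4 * (13365/16384) =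
      ∫ p in T, (4 * (J p * g p.1 p.2) - 4 * (g p.1 p.2 * g p.1 p.2)) := by
    rw [integral_sub (i1.const_mul 4) (i2.const_mul 4), integral_const_mul, integral_const_mul,
      T_g J, T_g (fun p => g p.1 p.2), Jg, G_val]
  rw [e]
  simp only [pow_two]
  apply integral_mono ((i1.const_mul 4).sub (i2.const_mul 4)) i3
  intro p
  dsimp only [Pi.sub_apply]
  nlinarith [sq_nonneg (J p - 2 * g p.1 p.2)]

lemma total_sq : ∫ q in {q : ℝ × ℝ × ℝ | 0 ≤ q.1 ∧ 0 ≤ q.2.1 ∧ 0 ≤ q.2.2},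
    (F q.1 q.2.1 q.2.2) ^ 2 = E (fun x y z => F x y z * F x y z) := by
  unfold E
  simp only [← pow_two]
  apply setIntegral_eq_integral_of_forall_compl_eq_zero
  intro q hq
  rw [F_R _ _ _ fun h => hq ⟨h.1.le, h.2.1.le, h.2.2.1.le⟩]
  norm_num


end Cutoff

/-- **Polymath8b, Theorem 3.14 (a piecewise polynomial cutoff)**: with `ε = 1/4`, there
is a square-integrable `F : [0,∞)³ → ℝ`, symmetric in its variables, supported on the
simplex `{t₁+t₂+t₃ ≤ 3/2}`, not a.e. zero, whose marginal `∫_0^∞ F dt₃` vanishes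
whenever `t₁, t₂ ≥ 0` with `t₁+t₂ > 1+ε`, and with
`3 ∫_{t₁+t₂ ≤ 1−ε} (∫_0^∞ F dt₃)² dt₁ dt₂ > 2 ∫_{[0,∞)³} F²`. -/
theorem exists_three_dim_cutoff :
    ∃ F : ℝ → ℝ → ℝ → ℝ,
      MemLp (fun q : ℝ × ℝ × ℝ => F q.1 q.2.1 q.2.2) 2 volume ∧
      (∀ t₁ t₂ t₃, F t₁ t₂ t₃ = F t₂ t₁ t₃) ∧
      (∀ t₁ t₂ t₃, F t₁ t₂ t₃ = F t₁ t₃ t₂) ∧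
      (∀ t₁ t₂ t₃ : ℝ, ¬ (0 ≤ t₁ ∧ 0 ≤ t₂ ∧ 0 ≤ t₃ ∧ t₁ + t₂ + t₃ ≤ 3 / 2) →
        F t₁ t₂ t₃ = 0) ∧
      ¬ ((fun q : ℝ × ℝ × ℝ => F q.1 q.2.1 q.2.2) =ᵐ[volume] 0) ∧
      (∀ t₁ t₂ : ℝ, 0 ≤ t₁ → 0 ≤ t₂ → 1 + 1 / 4 < t₁ + t₂ →
        (∫ s in Set.Ioi (0 : ℝ), F t₁ t₂ s) = 0) ∧
      2 * (∫ q in {q : ℝ × ℝ × ℝ | 0 ≤ q.1 ∧ 0 ≤ q.2.1 ∧ 0 ≤ q.2.2},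
            (F q.1 q.2.1 q.2.2) ^ 2) <
        3 * (∫ p in {p : ℝ × ℝ | 0 ≤ p.1 ∧ 0 ≤ p.2 ∧ p.1 + p.2 ≤ 1 - 1 / 4},
            (∫ s in Set.Ioi (0 : ℝ), F p.1 p.2 s) ^ 2) := by
  refine ⟨Cutoff.F, ?_, Cutoff.F_12, Cutoff.F_23, ?_, Cutoff.F_ne, ?_, ?_⟩
  · rw [memLp_two_iff_integrable_sq Cutoff.N_F.meas.aestronglyMeasurable]
    simpa only [pow_two] using Cutoff.N_FF.int
  · intro x y z h
    exact Cutoff.F_R _ _ _ fun hh => h ⟨hh.1.le, hh.2.1.le, hh.2.2.1.le, hh.2.2.2⟩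
  · intro x y _ _ h
    rw [Cutoff.half]
    exact Cutoff.marg_F x y (by linarith)
  · rw [Cutoff.total_sq]
    simp only [Cutoff.half]
    have h1 := Cutoff.J_lower
    have h2 := Cutoff.main_lower
    have h3 := Cutoff.E_FS
    change _ < 3 * ∫ p in Cutoff.T, Cutoff.J p ^ 2
    linarith
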